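/- Let U ⊆ ℝⁿ be open, let g be a smooth Riemannian metric on U with components g_{ij} and inverse (co-metric) components g^{ij}, and let α = α_i dx^i, β = β_i dx^i be 1-forms with constant coefficients α_i, β_i. Then, with subscripts after a comma denoting partial derivatives and summation over repeated indices, g(R(α♯,β♯)β♯,α♯) = (α_i β_k − α_k β_i)(α_j β_l − α_l β_j)( R₁^{ijkl} + R₂^{ijkl} + R₃^{ijkl} ), where R₁^{ijkl} = (1/2) g^{is} (g^{jt} g^{kl}_{,t})_{,s}, R₂^{ijkl} = −(1/8) g^{ij}_{,s} g^{st} g^{kl}_{,t}, and R₃^{ijkl} = −(3/4) g^{is} g^{kp}_{,s} g_{pq} g^{jt} g^{lq}_{,t}. -/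

import Mathlib

/-!
Local-coordinate (chart) model of a Riemannian manifold: points are elements
of `ℝⁿ`, vector fields and 1-forms are given by their component functions on
an open set `U`, and the metric by its matrix of components.
-/

noncomputable section

namespace RG

/-- Points of the chart. -/
abbrev Pt (n : ℕ) : Type := Fin n → ℝ
/-- Vector fields, by components. -/
abbrev VF (n : ℕ) : Type := Pt n → Fin n → ℝ
/-- 1-forms, by components. -/
abbrev OneForm (n : ℕ) : Type := Pt n → Fin n → ℝ
/-- Metric tensors, by components. -/
abbrev Met (n : ℕ) : Type := Pt n → Matrix (Fin n) (Fin n) ℝ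

variable {n : ℕ}

/-- Partial derivative `∂ₛ f`. -/
def pd (s : Fin n) (f : Pt n → ℝ) : Pt n → ℝ := fun x => fderiv ℝ f x (Pi.single s 1)

/-- Directional derivative `X f` of a function along a vector field. -/
def dder (X : VF n) (f : Pt n → ℝ) : Pt n → ℝ := fun x => fderiv ℝ f x (X x)

/-- Lie bracket `[X, Y]` of vector fields. -/
def bracket (X Y : VF n) : VF n :=
  fun x k => fderiv ℝ (fun y => Y y k) x (X x) - fderiv ℝ (fun y => X y k) x (Y x)

/-- The inverse (co-)metric `g⁻¹`. -/
def ginv (g : Met n) : Met n := fun x => (g x)⁻¹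

/-- Pairing `α(X)` of a 1-form with a vector field. -/
def pairF (α : OneForm n) (X : VF n) : Pt n → ℝ := fun x => ∑ i, α x i * X x i

/-- Metric inner product `g(X,Y)` of vector fields. -/
def gV (g : Met n) (X Y : VF n) : Pt n → ℝ := fun x => ∑ i, ∑ j, g x i j * X x i * Y x j

/-- Co-metric inner product `g⁻¹(α,β)` of 1-forms. -/
def gF (g : Met n) (α β : OneForm n) : Pt n → ℝ :=
  fun x => ∑ i, ∑ j, ginv g x i j * α x i * β x j

/-- Raising indices: `α♯ = g⁻¹ α`. -/
def sharp (g : Met n) (α : OneForm n) : VF n := fun x k => ∑ i, ginv g x i k * α x i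

/-- Lowering indices: `X♭ = g X`. -/
def flat (g : Met n) (X : VF n) : OneForm n := fun x k => ∑ i, g x i k * X x i

/-- Differential `df` of a function, as a 1-form. -/
def dF (f : Pt n → ℝ) : OneForm n := fun x i => pd i f x

/-- Exterior derivative of a 1-form, evaluated on two vector fields:
`dα(X,Y) = Σ (∂ᵢα_j − ∂_jαᵢ) Xⁱ Y^j`. -/
def dOne (α : OneForm n) (X Y : VF n) : Pt n → ℝ :=
  fun x => ∑ i, ∑ j, (pd i (fun y => α y j) x - pd j (fun y => α y i) x) * X x i * Y x j

/-- Christoffel symbols `Γ^k_{ij}` of the Levi-Civita connection. -/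
def chr (g : Met n) (k i j : Fin n) : Pt n → ℝ :=
  fun x => (1/2) * ∑ l, ginv g x k l *
    (pd i (fun y => g y j l) x + pd j (fun y => g y i l) x - pd l (fun y => g y i j) x)

/-- Levi-Civita covariant derivative `∇_X Y` of a vector field. -/
def covV (g : Met n) (X Y : VF n) : VF n :=
  fun x k => fderiv ℝ (fun y => Y y k) x (X x) + ∑ i, ∑ j, chr g k i j x * X x i * Y x j

/-- Levi-Civita covariant derivative `∇_X α` of a 1-form, characterized by
`(∇_X α)(Y) = X(α(Y)) − α(∇_X Y)`. -/
def covF (g : Met n) (X : VF n) (α : OneForm n) : OneForm n :=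
  fun x j => fderiv ℝ (fun y => α y j) x (X x) - ∑ i, ∑ k, X x i * chr g k i j x * α x k

/-- Riemann curvature tensor `R(X,Y)Z = ∇_X∇_Y Z − ∇_Y∇_X Z − ∇_{[X,Y]}Z`. -/
def Rcurv (g : Met n) (X Y Z : VF n) : VF n :=
  covV g X (covV g Y Z) - covV g Y (covV g X Z) - covV g (bracket X Y) Z

/-- Lie derivative of a 1-form along a vector field. -/
def lieF (X : VF n) (α : OneForm n) : OneForm n :=
  fun x i => fderiv ℝ (fun y => α y i) x (X x) + ∑ s, α x s * pd i (fun y => X y s) x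

/-- Lie derivative of a contravariant 2-tensor (such as the co-metric `g⁻¹`). -/
def lieCo (X : VF n) (G : Met n) : Met n :=
  fun x => Matrix.of fun i j =>
    fderiv ℝ (fun y => G y i j) x (X x)
      - ∑ s, G x s j * pd s (fun y => X y i) x
      - ∑ s, G x i s * pd s (fun y => X y j) x

/-- Evaluation of a contravariant 2-tensor on a pair of 1-forms. -/
def evCo (G : Met n) (α β : OneForm n) : Pt n → ℝ :=
  fun x => ∑ i, ∑ j, G x i j * α x i * β x j

/-- Smoothness of (the components of) a 1-form or vector field on `U`. -/
def SmoothSec (U : Set (Pt n)) (ω : Pt n → Fin n → ℝ) : Prop :=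
  ∀ i, ContDiffOn ℝ (⊤ : ℕ∞) (fun y => ω y i) U

/-- Smoothness of the metric components on `U`. -/
def SmoothMet (U : Set (Pt n)) (g : Met n) : Prop :=
  ∀ i j, ContDiffOn ℝ (⊤ : ℕ∞) (fun y => g y i j) U

/-- `g` is a smooth Riemannian metric on `U`. -/
def IsRiemannOn (U : Set (Pt n)) (g : Met n) : Prop :=
  SmoothMet U g ∧ ∀ x ∈ U, (g x).IsSymm ∧ (g x).PosDef

/-- A 1-form is closed on `U`. -/
def IsClosedOn (U : Set (Pt n)) (α : OneForm n) : Prop :=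
  ∀ x ∈ U, ∀ i j, pd i (fun y => α y j) x = pd j (fun y => α y i) x

end RG

open RG

/-!
Write `X = α♯`, `Y = β♯`. When `α` is closed, `⟨∇_Z α♯, W⟩` is symmetric in `Z` and `W`. With metric
compatibility this gives `∇_X Y + ∇_Y X = grad ⟨α, β⟩`, while `∇_X Y - ∇_Y X = [X, Y]` because the
connection is torsion-free; in particular `∇_X X = ½ grad ⟨α, α⟩`. Substituting these in
`⟨R(X, Y) Y, X⟩` eliminates the connection altogether (`gV_Rcurv_sharp`): what remains are second
derivatives along `X` and `Y` of `⟨α, α⟩`, `⟨α, β⟩`, `⟨β, β⟩`, inner products of their gradients,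
and `-¾ |[X, Y]|²`. For constant coefficients these three groups are contractions of `R₁`, `R₂` and
`R₃`, because the functions `⟨α, β⟩` and the components of `α♯` are then constant-coefficient
combinations of the co-metric components `g^{ij}`.
-/

namespace RG

open Filter Topology

section MatrixInverse

variable {𝕜 E ι : Type*} [NontriviallyNormedField 𝕜] [NormedAddCommGroup E] [NormedSpace 𝕜 E]
  [Fintype ι] [DecidableEq ι] {k : WithTop ℕ∞} {M : E → Matrix ι ι 𝕜} {x : E}

theorem contDiffAt_matrix_det (hM : ∀ i j, ContDiffAt 𝕜 k (fun y => M y i j) x) :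
    ContDiffAt 𝕜 k (fun y => (M y).det) x := by
  simp only [Matrix.det_apply']
  exact ContDiffAt.sum fun σ _ => contDiffAt_const.mul (contDiffAt_prod fun i _ => hM (σ i) i)

theorem contDiffAt_matrix_adjugate (hM : ∀ i j, ContDiffAt 𝕜 k (fun y => M y i j) x) (i j : ι) :
    ContDiffAt 𝕜 k (fun y => (M y).adjugate i j) x := by
  simp only [Matrix.adjugate_apply]
  refine contDiffAt_matrix_det fun p q => ?_
  obtain rfl | hp := eq_or_ne p j
  · simpa only [Matrix.updateRow_self] using contDiffAt_const
  · simpa only [Matrix.updateRow_ne hp] using hM p q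

theorem contDiffAt_matrix_inv (hM : ∀ i j, ContDiffAt 𝕜 k (fun y => M y i j) x)
    (hdet : (M x).det ≠ 0) (i j : ι) : ContDiffAt 𝕜 k (fun y => (M y)⁻¹ i j) x := by
  simp only [Matrix.inv_def, Ring.inverse_eq_inv', Matrix.smul_apply, smul_eq_mul]
  exact ((contDiffAt_matrix_det hM).inv hdet).mul (contDiffAt_matrix_adjugate hM i j)

end MatrixInverse

variable {n : ℕ} {k m : WithTop ℕ∞} {g : Met n} {x : Pt n} {f h : Pt n → ℝ} {X Y : VF n}
  {α β : OneForm n}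

theorem fderiv_apply_eq_dF_dotProduct (f : Pt n → ℝ) (x v : Pt n) :
    fderiv ℝ f x v = dF f x ⬝ᵥ v := by
  conv_lhs => rw [pi_eq_sum_univ' v]
  simp only [map_sum, map_smul, smul_eq_mul, dotProduct, dF, pd, mul_comm]

theorem contDiffAt_dder (hf : ContDiffAt ℝ k f x) (hX : ContDiffAt ℝ m X x) (hmk : m + 1 ≤ k) :
    ContDiffAt ℝ m (dder X f) x :=
  (hf.fderiv_right hmk).clm_apply hX

theorem contDiffAt_pd (hf : ContDiffAt ℝ k f x) (hmk : m + 1 ≤ k) (s : Fin n) :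
    ContDiffAt ℝ m (pd s f) x :=
  contDiffAt_dder hf contDiffAt_const hmk

theorem dder_congr (hfh : f =ᶠ[𝓝 x] h) (X : VF n) : dder X f x = dder X h x := by
  simp only [dder, hfh.fderiv_eq]

theorem dder_eventuallyEq (hfh : f =ᶠ[𝓝 x] h) (X : VF n) : dder X f =ᶠ[𝓝 x] dder X h :=
  hfh.eventuallyEq_nhds.mono fun _ hy => dder_congr hy X

theorem dder_sub (hf : DifferentiableAt ℝ f x) (hh : DifferentiableAt ℝ h x) (X : VF n) :
    dder X (fun y => f y - h y) x = dder X f x - dder X h x := by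
  simp only [dder, fderiv_fun_sub hf hh, sub_apply]

theorem dder_const_mul (hf : DifferentiableAt ℝ f x) (c : ℝ) (X : VF n) :
    dder X (fun y => c * f y) x = c * dder X f x := by
  simp only [dder, fderiv_const_mul hf, smul_apply, smul_eq_mul]

theorem dder_sum_mul {ι : Type*} [Fintype ι] {F : ι → Pt n → ℝ}
    (hF : ∀ i, DifferentiableAt ℝ (F i) x) (c : ι → ℝ) (X : VF n) :
    dder X (fun y => ∑ i, c i * F i y) x = ∑ i, c i * dder X (F i) x := by
  have hcF : ∀ i ∈ Finset.univ, DifferentiableAt ℝ (fun y => c i * F i y) x :=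
    fun i _ => (hF i).const_mul (c i)
  rw [dder, fderiv_fun_sum hcF, sum_apply]
  exact Finset.sum_congr rfl fun i _ => dder_const_mul (hF i) (c i) X

/-- The coordinatewise derivative `X^s ∂_s Y^k` of the components of `Y` along `X`, i.e. the
covariant derivative of the flat connection of the chart. -/
def coordDeriv (X Y : VF n) : VF n := fun x k => dder X (fun y => Y y k) x

theorem bracket_apply (X Y : VF n) (x : Pt n) :
    bracket X Y x = coordDeriv X Y x - coordDeriv Y X x :=
  rfl

theorem coordDeriv_eq_fderiv (hY : DifferentiableAt ℝ Y x) (X : VF n) :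
    coordDeriv X Y x = fderiv ℝ Y x (X x) := by
  funext k
  rw [coordDeriv, dder, fderiv_apply hY]
  rfl

theorem fderiv_bracket (hf : ContDiffAt ℝ 2 f x) (hX : DifferentiableAt ℝ X x)
    (hY : DifferentiableAt ℝ Y x) :
    fderiv ℝ f x (bracket X Y x) = dder X (dder Y f) x - dder Y (dder X f) x := by
  rw [bracket_apply, coordDeriv_eq_fderiv hY, coordDeriv_eq_fderiv hX]
  exact VectorField.fderiv_apply_lieBracket hf
    (by rw [minSmoothness_of_isRCLikeNormedField]) hY hX

/-- The bilinear form on tangent vectors at `x` with matrix `g x`. -/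
abbrev metricAt (g : Met n) (x : Pt n) : LinearMap.BilinForm ℝ (Fin n → ℝ) :=
  Matrix.toBilin' (g x)

theorem gV_eq_metricAt (g : Met n) (X Y : VF n) (x : Pt n) :
    gV g X Y x = metricAt g x (X x) (Y x) := by
  simp only [gV, Matrix.toBilin'_apply, mul_comm]

theorem gF_eq_metricAt_ginv (g : Met n) (α β : OneForm n) (x : Pt n) :
    gF g α β x = metricAt (ginv g) x (α x) (β x) :=
  gV_eq_metricAt (ginv g) α β x

theorem metricAt_comm (hsymm : (g x).IsSymm) (u v : Fin n → ℝ) :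
    metricAt g x u v = metricAt g x v u :=
  (Matrix.isSymm_toBilin'_iff_isSymm.2 hsymm).eq u v

theorem gF_comm_eventuallyEq (hsymm : ∀ᶠ y in 𝓝 x, (g y).IsSymm) (α β : OneForm n) :
    gF g α β =ᶠ[𝓝 x] gF g β α :=
  hsymm.mono fun y hy => by
    rw [gF_eq_metricAt_ginv, gF_eq_metricAt_ginv, metricAt_comm hy.inv]

theorem eq_of_forall_metricAt_eq (hdet : (g x).det ≠ 0) {u v : Fin n → ℝ}
    (huv : ∀ w, metricAt g x u w = metricAt g x v w) : u = v := by
  have hnondeg := LinearMap.BilinForm.nondegenerate_toBilin'_of_det_ne_zero' (g x) hdet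
  refine sub_eq_zero.1 (hnondeg.1 (u - v) fun w => ?_)
  rw [map_sub, LinearMap.sub_apply, huv w, sub_self]

theorem sharp_apply (g : Met n) (α : OneForm n) (x : Pt n) :
    sharp g α x = Matrix.vecMul (α x) (ginv g x) := by
  funext k
  simp only [sharp, Matrix.vecMul, dotProduct, mul_comm]

theorem metricAt_sharp (hdet : (g x).det ≠ 0) (α : OneForm n) (w : Fin n → ℝ) :
    metricAt g x (sharp g α x) w = α x ⬝ᵥ w := by
  rw [sharp_apply, Matrix.toBilin'_apply', ← Matrix.dotProduct_mulVec, Matrix.mulVec_mulVec,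
    ginv, Matrix.nonsing_inv_mul _ hdet.isUnit, Matrix.one_mulVec]

/-- The gradient `(df)♯` of a function. -/
def grad (g : Met n) (f : Pt n → ℝ) : VF n := sharp g (dF f)

theorem metricAt_grad (hdet : (g x).det ≠ 0) (f : Pt n → ℝ) (w : Fin n → ℝ) :
    metricAt g x (grad g f x) w = fderiv ℝ f x w := by
  rw [grad, metricAt_sharp hdet, fderiv_apply_eq_dF_dotProduct]

theorem metricAt_sharp_sharp (hdet : (g x).det ≠ 0) (hsymm : (g x).IsSymm) (α β : OneForm n) :
    metricAt g x (sharp g α x) (sharp g β x) = metricAt (ginv g) x (α x) (β x) := by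
  rw [metricAt_comm hsymm, metricAt_sharp hdet, sharp_apply, dotProduct_comm,
    ← Matrix.dotProduct_mulVec, Matrix.toBilin'_apply']

/-- The derivative `(∂_z g)(v, w)` of the metric coefficients in the direction `z`, evaluated on
`v` and `w`. -/
def metricDeriv (g : Met n) (x : Pt n) (z v w : Fin n → ℝ) : ℝ :=
  ∑ i, ∑ j, fderiv ℝ (fun y => g y i j) x z * v i * w j

theorem metricDeriv_comm (hsymm : ∀ᶠ y in 𝓝 x, (g y).IsSymm) (z v w : Fin n → ℝ) :
    metricDeriv g x z v w = metricDeriv g x z w v := by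
  have hfderiv (i j : Fin n) : fderiv ℝ (fun y => g y i j) x = fderiv ℝ (fun y => g y j i) x :=
    EventuallyEq.fderiv_eq (hsymm.mono fun y hy => hy.apply j i)
  simp only [metricDeriv]
  rw [Finset.sum_comm]
  exact Finset.sum_congr rfl fun j _ => Finset.sum_congr rfl fun i _ => by
    rw [hfderiv i j]; ring

theorem dder_gV (hg : ∀ i j, DifferentiableAt ℝ (fun y => g y i j) x) {V W : VF n}
    (hV : DifferentiableAt ℝ V x) (hW : DifferentiableAt ℝ W x) (Z : VF n) :
    dder Z (gV g V W) x = metricDeriv g x (Z x) (V x) (W x) +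
      metricAt g x (coordDeriv Z V x) (W x) + metricAt g x (V x) (coordDeriv Z W x) := by
  have hV' := differentiableAt_pi.1 hV
  have hW' := differentiableAt_pi.1 hW
  have hgV (i j : Fin n) : DifferentiableAt ℝ (fun y => g y i j * V y i) x :=
    (hg i j).fun_mul (hV' i)
  have hgVW (i j : Fin n) : DifferentiableAt ℝ (fun y => g y i j * V y i * W y j) x :=
    (hgV i j).fun_mul (hW' j)
  have hsum (i : Fin n) : DifferentiableAt ℝ (fun y => ∑ j, g y i j * V y i * W y j) x :=
    DifferentiableAt.fun_sum fun j _ => hgVW i j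
  unfold dder gV
  rw [fderiv_fun_sum fun i _ => hsum i]
  simp only [fderiv_fun_sum fun j _ => hgVW _ j, fderiv_fun_mul (hgV _ _) (hW' _),
    fderiv_fun_mul (hg _ _) (hV' _), sum_apply, add_apply, smul_apply, smul_eq_mul,
    metricDeriv, Matrix.toBilin'_apply, coordDeriv, dder, ← Finset.sum_add_distrib]
  exact Finset.sum_congr rfl fun i _ => Finset.sum_congr rfl fun j _ => by ring

/-- The Christoffel term `Γ(z, v)^k = Γ^k_{ij} z^i v^j` of the Levi-Civita connection. -/
def christoffelAt (g : Met n) (x : Pt n) (z v : Fin n → ℝ) : Fin n → ℝ :=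
  fun k => ∑ i, ∑ j, chr g k i j x * z i * v j

theorem covV_apply (g : Met n) (X Y : VF n) (x : Pt n) :
    covV g X Y x = coordDeriv X Y x + christoffelAt g x (X x) (Y x) :=
  rfl

theorem chr_comm (hsymm : ∀ᶠ y in 𝓝 x, (g y).IsSymm) (l i j : Fin n) :
    chr g l i j x = chr g l j i x := by
  have hpd (s : Fin n) : pd s (fun y => g y i j) x = pd s (fun y => g y j i) x :=
    dder_congr (hsymm.mono fun y hy => hy.apply j i) fun _ => Pi.single s 1
  simp only [chr, hpd, add_comm (pd i _ x)]

theorem christoffelAt_comm (hsymm : ∀ᶠ y in 𝓝 x, (g y).IsSymm) (z v : Fin n → ℝ) :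
    christoffelAt g x z v = christoffelAt g x v z := by
  funext l
  simp only [christoffelAt]
  rw [Finset.sum_comm]
  exact Finset.sum_congr rfl fun j _ => Finset.sum_congr rfl fun i _ => by
    rw [chr_comm hsymm]; ring

theorem sum_metric_mul_chr (hdet : (g x).det ≠ 0) (l i j : Fin n) :
    ∑ p, g x l p * chr g p i j x = (1 / 2) *
      (pd i (fun y => g y j l) x + pd j (fun y => g y i l) x - pd l (fun y => g y i j) x) := by
  set c : Fin n → ℝ := fun q =>
    pd i (fun y => g y j q) x + pd j (fun y => g y i q) x - pd q (fun y => g y i j) x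
  calc ∑ p, g x l p * chr g p i j x
      = ((g x).mulVec ((1 / 2 : ℝ) • (ginv g x).mulVec c)) l := rfl
    _ = (1 / 2) * c l := by
      rw [Matrix.mulVec_smul, Matrix.mulVec_mulVec, ginv, Matrix.mul_nonsing_inv _ hdet.isUnit,
        Matrix.one_mulVec, Pi.smul_apply, smul_eq_mul]

theorem metricDeriv_eq_sum_pd (g : Met n) (x : Pt n) (z v w : Fin n → ℝ) :
    metricDeriv g x z v w = ∑ s, ∑ i, ∑ j, pd s (fun y => g y i j) x * z s * v i * w j := by
  simp only [metricDeriv, fderiv_apply_eq_dF_dotProduct, dotProduct, dF, Finset.sum_mul]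
  rw [Finset.sum_comm_cycle]

theorem metricAt_christoffelAt (hdet : (g x).det ≠ 0) (z v w : Fin n → ℝ) :
    metricAt g x w (christoffelAt g x z v) = (1 / 2) *
      (metricDeriv g x z v w + metricDeriv g x v z w - metricDeriv g x w z v) := by
  calc metricAt g x w (christoffelAt g x z v)
      = ∑ i, ∑ j, ∑ l, (∑ p, g x l p * chr g p i j x) * z i * v j * w l := by
        simp only [Matrix.toBilin'_apply, christoffelAt, Finset.mul_sum, Finset.sum_mul]
        rw [Finset.sum_comm_cycle]
        refine Finset.sum_congr rfl fun i _ => ?_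
        rw [Finset.sum_comm_cycle]
        refine Finset.sum_congr rfl fun j _ => Finset.sum_congr rfl fun l _ =>
          Finset.sum_congr rfl fun p _ => ?_
        ring
    _ = _ := by
        simp only [sum_metric_mul_chr hdet]
        rw [metricDeriv_eq_sum_pd g x z v w, metricDeriv_eq_sum_pd g x v z w,
          metricDeriv_eq_sum_pd g x w z v, Finset.sum_comm (f := fun s i => ∑ j, _ * v s * _ * _),
          ← Finset.sum_comm_cycle (f := fun i j s => _ * w s * _ * _)]
        simp only [Finset.mul_sum, ← Finset.sum_add_distrib, ← Finset.sum_sub_distrib]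
        exact Finset.sum_congr rfl fun i _ => Finset.sum_congr rfl fun j _ =>
          Finset.sum_congr rfl fun l _ => by ring

theorem dder_gV_eq_covV (hdet : (g x).det ≠ 0) (hsymm : ∀ᶠ y in 𝓝 x, (g y).IsSymm)
    (hg : ∀ i j, DifferentiableAt ℝ (fun y => g y i j) x) {V W : VF n}
    (hV : DifferentiableAt ℝ V x) (hW : DifferentiableAt ℝ W x) (Z : VF n) :
    dder Z (gV g V W) x =
      metricAt g x (covV g Z V x) (W x) + metricAt g x (V x) (covV g Z W x) := by
  have hΓ : metricAt g x (christoffelAt g x (Z x) (V x)) (W x) +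
      metricAt g x (V x) (christoffelAt g x (Z x) (W x)) = metricDeriv g x (Z x) (V x) (W x) := by
    rw [metricAt_comm hsymm.self_of_nhds, metricAt_christoffelAt hdet, metricAt_christoffelAt hdet,
      metricDeriv_comm hsymm _ (W x) (V x)]
    ring
  rw [dder_gV hg hV hW, ← hΓ, covV_apply, covV_apply, map_add, map_add, LinearMap.add_apply]
  ring

theorem covV_sub_covV (hsymm : ∀ᶠ y in 𝓝 x, (g y).IsSymm) (X Y : VF n) :
    covV g X Y x - covV g Y X x = bracket X Y x := by
  rw [covV_apply, covV_apply, bracket_apply, christoffelAt_comm hsymm]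
  abel

/-- The components `g` form a pseudo-Riemannian metric of class `C²` near `x`, of any signature. -/
structure IsPseudoRiemannAt (g : Met n) (x : Pt n) : Prop where
  contDiffAt : ∀ i j, ContDiffAt ℝ 2 (fun y => g y i j) x
  eventually_isSymm : ∀ᶠ y in 𝓝 x, (g y).IsSymm
  det_ne_zero : (g x).det ≠ 0

theorem IsRiemannOn.isPseudoRiemannAt {U : Set (Pt n)} (hU : IsOpen U) (hg : IsRiemannOn U g)
    (hx : x ∈ U) : IsPseudoRiemannAt g x where
  contDiffAt i j := contDiffAt_infty.1 ((hg.1 i j).contDiffAt (hU.mem_nhds hx)) 2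
  eventually_isSymm := (hU.eventually_mem hx).mono fun y hy => (hg.2 y hy).1
  det_ne_zero := (hg.2 x hx).2.det_pos.ne'

namespace IsPseudoRiemannAt

theorem isSymm (hg : IsPseudoRiemannAt g x) : (g x).IsSymm :=
  hg.eventually_isSymm.self_of_nhds

theorem eventually (hg : IsPseudoRiemannAt g x) : ∀ᶠ y in 𝓝 x, IsPseudoRiemannAt g y := by
  have hC2 : ∀ᶠ y in 𝓝 x, ∀ i j, ContDiffAt ℝ 2 (fun z => g z i j) y :=
    eventually_all.2 fun i => eventually_all.2 fun j => (hg.contDiffAt i j).eventually (by simp)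
  have hdet := (contDiffAt_matrix_det hg.contDiffAt).continuousAt.eventually_ne hg.det_ne_zero
  filter_upwards [hC2, hg.eventually_isSymm.eventually_nhds, hdet] with y h₁ h₂ h₃
  exact ⟨h₁, h₂, h₃⟩

theorem differentiableAt (hg : IsPseudoRiemannAt g x) (i j : Fin n) :
    DifferentiableAt ℝ (fun y => g y i j) x :=
  (hg.contDiffAt i j).differentiableAt two_ne_zero

theorem contDiffAt_ginv (hg : IsPseudoRiemannAt g x) (i j : Fin n) :
    ContDiffAt ℝ 2 (fun y => ginv g y i j) x :=
  contDiffAt_matrix_inv hg.contDiffAt hg.det_ne_zero i j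

theorem contDiffAt_sharp (hg : IsPseudoRiemannAt g x) (hk : k ≤ 2) (hα : ContDiffAt ℝ k α x) :
    ContDiffAt ℝ k (sharp g α) x :=
  contDiffAt_pi.2 fun j => ContDiffAt.sum fun i _ =>
    ((hg.contDiffAt_ginv i j).of_le hk).mul (contDiffAt_pi.1 hα i)

theorem contDiffAt_gF (hg : IsPseudoRiemannAt g x) (hk : k ≤ 2) (hα : ContDiffAt ℝ k α x)
    (hβ : ContDiffAt ℝ k β x) : ContDiffAt ℝ k (gF g α β) x :=
  ContDiffAt.sum fun i _ => ContDiffAt.sum fun j _ =>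
    (((hg.contDiffAt_ginv i j).of_le hk).mul (contDiffAt_pi.1 hα i)).mul (contDiffAt_pi.1 hβ j)

theorem contDiffAt_chr (hg : IsPseudoRiemannAt g x) (l i j : Fin n) :
    ContDiffAt ℝ 1 (chr g l i j) x := by
  have hpd (s p q : Fin n) : ContDiffAt ℝ 1 (pd s fun y => g y p q) x :=
    contDiffAt_pd (hg.contDiffAt p q) one_add_one_eq_two.le s
  exact contDiffAt_const.mul <| ContDiffAt.sum fun q _ =>
    ((hg.contDiffAt_ginv l q).of_le one_le_two).mul (((hpd i j q).add (hpd j i q)).sub (hpd q i j))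

theorem contDiffAt_covV (hg : IsPseudoRiemannAt g x) (hX : ContDiffAt ℝ 1 X x)
    (hY : ContDiffAt ℝ 2 Y x) : ContDiffAt ℝ 1 (covV g X Y) x :=
  contDiffAt_pi.2 fun l =>
    (contDiffAt_dder (contDiffAt_pi.1 hY l) hX one_add_one_eq_two.le).add <|
      ContDiffAt.sum fun i _ => ContDiffAt.sum fun j _ =>
        ((hg.contDiffAt_chr l i j).mul (contDiffAt_pi.1 hX i)).mul
          ((contDiffAt_pi.1 hY j).of_le one_le_two)

theorem gV_sharp_sharp_eventuallyEq (hg : IsPseudoRiemannAt g x) (α β : OneForm n) :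
    gV g (sharp g α) (sharp g β) =ᶠ[𝓝 x] gF g α β :=
  hg.eventually.mono fun y hy => by
    rw [gV_eq_metricAt, metricAt_sharp_sharp hy.det_ne_zero hy.isSymm, gF_eq_metricAt_ginv]

end IsPseudoRiemannAt

/-- A closed 1-form of class `C²` near `x`. -/
structure IsClosedFormAt (α : OneForm n) (x : Pt n) : Prop where
  contDiffAt : ContDiffAt ℝ 2 α x
  eventually_pd_comm : ∀ᶠ y in 𝓝 x, ∀ i j, pd i (fun z => α z j) y = pd j (fun z => α z i) y

theorem isClosedFormAt_const (a : Fin n → ℝ) (x : Pt n) : IsClosedFormAt (fun _ => a) x where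
  contDiffAt := contDiffAt_const
  eventually_pd_comm := .of_forall fun y i j => by simp only [pd, fderiv_fun_const, Pi.zero_apply,
    zero_apply]

namespace IsClosedFormAt

theorem eventually (hα : IsClosedFormAt α x) : ∀ᶠ y in 𝓝 x, IsClosedFormAt α y := by
  filter_upwards [hα.contDiffAt.eventually (by simp), hα.eventually_pd_comm.eventually_nhds]
    with y h₁ h₂
  exact ⟨h₁, h₂⟩

theorem differentiableAt (hα : IsClosedFormAt α x) : DifferentiableAt ℝ α x :=
  hα.contDiffAt.differentiableAt two_ne_zero

theorem fderiv_dotProduct_comm (hα : IsClosedFormAt α x) (z w : Fin n → ℝ) :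
    fderiv ℝ (fun y => w ⬝ᵥ α y) x z = fderiv ℝ (fun y => z ⬝ᵥ α y) x w := by
  have hexpand (u v : Fin n → ℝ) : fderiv ℝ (fun y => u ⬝ᵥ α y) x v =
      ∑ i, ∑ s, u i * pd s (fun y => α y i) x * v s := by
    refine (dder_sum_mul (differentiableAt_pi.1 hα.differentiableAt) u fun _ => v).trans ?_
    simp only [dder, fderiv_apply_eq_dF_dotProduct, dotProduct, dF, Finset.mul_sum, mul_assoc]
  rw [hexpand, hexpand, Finset.sum_comm]
  exact Finset.sum_congr rfl fun i _ => Finset.sum_congr rfl fun s _ => by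
    rw [hα.eventually_pd_comm.self_of_nhds]; ring

theorem metricAt_covV_sharp_comm (hα : IsClosedFormAt α x) (hg : IsPseudoRiemannAt g x)
    (Z W : VF n) :
    metricAt g x (covV g Z (sharp g α) x) (W x) = metricAt g x (covV g W (sharp g α) x) (Z x) := by
  have hleibniz (z w : Fin n → ℝ) : fderiv ℝ (fun y => w ⬝ᵥ α y) x z =
      metricAt g x (covV g (fun _ => z) (sharp g α) x) w +
        metricAt g x (sharp g α x) (christoffelAt g x z w) := by
    have hpair : (fun y => w ⬝ᵥ α y) =ᶠ[𝓝 x] gV g (sharp g α) (fun _ => w) :=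
      hg.eventually.mono fun y hy => by
        rw [gV_eq_metricAt, metricAt_sharp hy.det_ne_zero, dotProduct_comm]
    have hconst : covV g (fun _ => z) (fun _ => w) x = christoffelAt g x z w := by
      rw [covV_apply, coordDeriv_eq_fderiv (differentiableAt_const w), fderiv_fun_const]
      exact zero_add _
    rw [← hconst, ← dder_gV_eq_covV hg.det_ne_zero hg.eventually_isSymm hg.differentiableAt
      ((hg.contDiffAt_sharp le_rfl hα.contDiffAt).differentiableAt two_ne_zero)
      (differentiableAt_const w)]
    exact dder_congr hpair fun _ => z
  have hsymm := hα.fderiv_dotProduct_comm (Z x) (W x)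
  rw [hleibniz, hleibniz, christoffelAt_comm hg.eventually_isSymm] at hsymm
  exact add_right_cancel hsymm

end IsClosedFormAt

section ClosedForms

variable (hg : IsPseudoRiemannAt g x) (hα : IsClosedFormAt α x) (hβ : IsClosedFormAt β x)
include hg hα

theorem differentiableAt_sharp : DifferentiableAt ℝ (sharp g α) x :=
  (hg.contDiffAt_sharp le_rfl hα.contDiffAt).differentiableAt two_ne_zero

theorem dder_gV_sharp {V : VF n} (hV : DifferentiableAt ℝ V x) (Z : VF n) :
    dder Z (gV g V (sharp g α)) x = metricAt g x (covV g Z V x) (sharp g α x) +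
      metricAt g x (V x) (covV g Z (sharp g α) x) :=
  dder_gV_eq_covV hg.det_ne_zero hg.eventually_isSymm hg.differentiableAt hV
    (differentiableAt_sharp hg hα) Z

include hβ

theorem differentiableAt_covV_sharp :
    DifferentiableAt ℝ (covV g (sharp g α) (sharp g β)) x :=
  (hg.contDiffAt_covV (hg.contDiffAt_sharp one_le_two (hα.contDiffAt.of_le one_le_two))
    (hg.contDiffAt_sharp le_rfl hβ.contDiffAt)).differentiableAt one_ne_zero

theorem differentiableAt_dder_gF {γ : OneForm n} (hγ : IsClosedFormAt γ x) :
    DifferentiableAt ℝ (dder (sharp g α) (gF g β γ)) x :=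
  (contDiffAt_dder (hg.contDiffAt_gF le_rfl hβ.contDiffAt hγ.contDiffAt)
    (hg.contDiffAt_sharp one_le_two (hα.contDiffAt.of_le one_le_two))
    one_add_one_eq_two.le).differentiableAt one_ne_zero

theorem dder_gF (Z : VF n) :
    dder Z (gF g α β) x = metricAt g x (covV g Z (sharp g α) x) (sharp g β x) +
      metricAt g x (sharp g α x) (covV g Z (sharp g β) x) := by
  rw [← dder_gV_sharp hg hβ (differentiableAt_sharp hg hα)]
  exact dder_congr (hg.gV_sharp_sharp_eventuallyEq α β).symm Z

theorem covV_sharp_add_covV_sharp :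
    covV g (sharp g α) (sharp g β) x + covV g (sharp g β) (sharp g α) x =
      grad g (gF g α β) x := by
  refine eq_of_forall_metricAt_eq hg.det_ne_zero fun w => ?_
  calc metricAt g x (covV g (sharp g α) (sharp g β) x + covV g (sharp g β) (sharp g α) x) w
      = metricAt g x (covV g (fun _ => w) (sharp g β) x) (sharp g α x) +
          metricAt g x (covV g (fun _ => w) (sharp g α) x) (sharp g β x) := by
        rw [map_add, LinearMap.add_apply, hβ.metricAt_covV_sharp_comm hg _ fun _ => w,
          hα.metricAt_covV_sharp_comm hg _ fun _ => w]
    _ = dder (fun _ => w) (gF g α β) x := by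
        rw [dder_gF hg hα hβ, metricAt_comm hg.isSymm (sharp g α x), add_comm]
    _ = metricAt g x (grad g (gF g α β) x) w := (metricAt_grad hg.det_ne_zero _ w).symm

theorem covV_sharp_sharp :
    covV g (sharp g α) (sharp g β) x =
      (1 / 2 : ℝ) • (grad g (gF g α β) x + bracket (sharp g α) (sharp g β) x) := by
  rw [← covV_sharp_add_covV_sharp hg hα hβ, ← covV_sub_covV hg.eventually_isSymm]
  module

theorem covV_sharp_sharp_swap :
    covV g (sharp g β) (sharp g α) x =
      (1 / 2 : ℝ) • (grad g (gF g α β) x - bracket (sharp g α) (sharp g β) x) := by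
  rw [← covV_sharp_add_covV_sharp hg hα hβ, ← covV_sub_covV hg.eventually_isSymm]
  module

omit hβ in
theorem covV_sharp_self :
    covV g (sharp g α) (sharp g α) x = (1 / 2 : ℝ) • grad g (gF g α α) x := by
  rw [← covV_sharp_add_covV_sharp hg hα hα]
  module

theorem metricAt_covV_sharp_sharp_left :
    metricAt g x (covV g (sharp g α) (sharp g β) x) (sharp g α x) =
      dder (sharp g α) (gF g α β) x - (1 / 2) * dder (sharp g β) (gF g α α) x := by
  rw [dder_gF hg hα hβ, dder_gF hg hα hα, hα.metricAt_covV_sharp_comm hg,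
    metricAt_comm hg.isSymm (sharp g α x) (covV g _ _ x), metricAt_comm hg.isSymm (sharp g α x)]
  ring

theorem metricAt_covV_covV_self :
    metricAt g x (covV g (sharp g α) (covV g (sharp g β) (sharp g β)) x) (sharp g α x) =
      (1 / 2) * dder (sharp g α) (dder (sharp g α) (gF g β β)) x -
        (1 / 4) * metricAt g x (grad g (gF g α α) x) (grad g (gF g β β) x) := by
  set X := sharp g α
  set Y := sharp g β
  have hYY : DifferentiableAt ℝ (covV g Y Y) x := differentiableAt_covV_sharp hg hβ hβ
  have hXB : DifferentiableAt ℝ (dder X (gF g β β)) x := differentiableAt_dder_gF hg hα hβ hβ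
  have hpair : gV g (covV g Y Y) X =ᶠ[𝓝 x] fun y => (1 / 2) * dder X (gF g β β) y := by
    filter_upwards [hg.eventually, hβ.eventually] with y hgy hβy
    rw [gV_eq_metricAt, covV_sharp_self hgy hβy, map_smul, LinearMap.smul_apply,
      metricAt_grad hgy.det_ne_zero, smul_eq_mul]
    rfl
  have hleibniz := dder_gV_sharp hg hα hYY X
  rw [dder_congr hpair, dder_const_mul hXB, covV_sharp_self hg hα,
    covV_sharp_self hg hβ] at hleibniz
  simp only [map_smul, LinearMap.smul_apply, smul_eq_mul] at hleibniz
  rw [metricAt_comm hg.isSymm (grad g (gF g β β) x)] at hleibniz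
  linear_combination -hleibniz

theorem metricAt_covV_covV_swap :
    metricAt g x (covV g (sharp g β) (covV g (sharp g α) (sharp g β)) x) (sharp g α x) =
      dder (sharp g β) (dder (sharp g α) (gF g α β)) x -
        (1 / 2) * dder (sharp g β) (dder (sharp g β) (gF g α α)) x -
        (1 / 4) * (metricAt g x (grad g (gF g α β) x) (grad g (gF g α β) x) -
          metricAt g x (bracket (sharp g α) (sharp g β) x)
            (bracket (sharp g α) (sharp g β) x)) := by
  set X := sharp g α
  set Y := sharp g β
  have hXY : DifferentiableAt ℝ (covV g X Y) x := differentiableAt_covV_sharp hg hα hβ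
  have hXC : DifferentiableAt ℝ (dder X (gF g α β)) x := differentiableAt_dder_gF hg hα hα hβ
  have hYA : DifferentiableAt ℝ (dder Y (gF g α α)) x := differentiableAt_dder_gF hg hβ hα hα
  have hpair : gV g (covV g X Y) X =ᶠ[𝓝 x]
      fun y => dder X (gF g α β) y - (1 / 2) * dder Y (gF g α α) y := by
    filter_upwards [hg.eventually, hα.eventually, hβ.eventually] with y hgy hαy hβy
    rw [gV_eq_metricAt, metricAt_covV_sharp_sharp_left hgy hαy hβy]
  have hleibniz := dder_gV_sharp hg hα hXY Y
  rw [dder_congr hpair, dder_sub hXC (hYA.const_mul _), dder_const_mul hYA,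
    covV_sharp_sharp hg hα hβ, covV_sharp_sharp_swap hg hα hβ] at hleibniz
  simp only [map_smul, map_add, map_sub, LinearMap.smul_apply, LinearMap.add_apply,
    smul_eq_mul] at hleibniz
  rw [metricAt_comm hg.isSymm (bracket X Y x) (grad g _ x)] at hleibniz
  linear_combination -hleibniz

theorem metricAt_covV_bracket :
    metricAt g x (covV g (bracket (sharp g α) (sharp g β)) (sharp g β) x) (sharp g α x) =
      (1 / 2) * (dder (sharp g α) (dder (sharp g β) (gF g α β)) x -
        dder (sharp g β) (dder (sharp g α) (gF g α β)) x +
        metricAt g x (bracket (sharp g α) (sharp g β) x) (bracket (sharp g α) (sharp g β) x)) := by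
  rw [hβ.metricAt_covV_sharp_comm hg, covV_sharp_sharp hg hα hβ, map_smul, map_add,
    LinearMap.smul_apply, LinearMap.add_apply, metricAt_grad hg.det_ne_zero,
    fderiv_bracket (hg.contDiffAt_gF le_rfl hα.contDiffAt hβ.contDiffAt)
      (differentiableAt_sharp hg hα) (differentiableAt_sharp hg hβ), smul_eq_mul]

theorem gV_Rcurv_sharp :
    gV g (Rcurv g (sharp g α) (sharp g β) (sharp g β)) (sharp g α) x =
      (1 / 2) * (dder (sharp g α) (dder (sharp g α) (gF g β β)) x +
        dder (sharp g β) (dder (sharp g β) (gF g α α)) x -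
        dder (sharp g α) (dder (sharp g β) (gF g α β)) x -
        dder (sharp g β) (dder (sharp g α) (gF g α β)) x) +
      (1 / 4) * (metricAt g x (grad g (gF g α β) x) (grad g (gF g α β) x) -
        metricAt g x (grad g (gF g α α) x) (grad g (gF g β β) x)) -
      (3 / 4) * metricAt g x (bracket (sharp g α) (sharp g β) x)
        (bracket (sharp g α) (sharp g β) x) := by
  rw [gV_eq_metricAt, Rcurv, Pi.sub_apply, Pi.sub_apply, map_sub, map_sub,
    LinearMap.sub_apply, LinearMap.sub_apply, metricAt_covV_covV_self hg hα hβ,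
    metricAt_covV_covV_swap hg hα hβ, metricAt_covV_bracket hg hα hβ]
  ring

end ClosedForms

/-- The full contraction `T^{ijkl} a_i b_j c_k d_l` of a contravariant 4-tensor. -/
def contract (T : Fin n → Fin n → Fin n → Fin n → ℝ) (a b c d : Fin n → ℝ) : ℝ :=
  ∑ i, a i * ∑ j, b j * ∑ k, c k * ∑ l, d l * T i j k l

section Contract

variable (S T : Fin n → Fin n → Fin n → Fin n → ℝ) (a b c d : Fin n → ℝ)

theorem contract_sub :
    contract (fun i j k l => S i j k l - T i j k l) a b c d =
      contract S a b c d - contract T a b c d := by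
  simp only [contract, mul_sub, Finset.sum_sub_distrib]

theorem contract_const_mul (r : ℝ) :
    contract (fun i j k l => r * T i j k l) a b c d = r * contract T a b c d := by
  simp only [contract, mul_left_comm _ r, ← Finset.mul_sum]

theorem contract_swap :
    contract T a b c d = contract (fun i k j l => T i j k l) a c b d := by
  refine Finset.sum_congr rfl fun i _ => ?_
  simp only [Finset.mul_sum]
  rw [Finset.sum_comm]
  exact Finset.sum_congr rfl fun k _ => Finset.sum_congr rfl fun j _ =>
    Finset.sum_congr rfl fun l _ => by ring

theorem contract_bilin {M : Type*} [AddCommGroup M] [Module ℝ M] (B : LinearMap.BilinForm ℝ M)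
    (u v : Fin n → Fin n → M) :
    contract (fun i j k l => B (u i j) (v k l)) a b c d =
      B (∑ i, a i • ∑ j, b j • u i j) (∑ k, c k • ∑ l, d l • v k l) := by
  have hleft (m : M) : B (∑ i, a i • ∑ j, b j • u i j) m = ∑ i, a i * ∑ j, b j * B (u i j) m := by
    simp only [map_sum, map_smul, LinearMap.sum_apply, LinearMap.smul_apply, smul_eq_mul]
  rw [hleft]
  simp only [contract, map_sum, map_smul, smul_eq_mul]

theorem sum_antisymm_mul_eq_contract :
    ∑ i, ∑ j, ∑ k, ∑ l, (a i * b k - a k * b i) * (a j * b l - a l * b j) * T i j k l =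
      contract T a a b b - contract T a b b a - contract T b a a b + contract T b b a a := by
  simp only [contract, Finset.mul_sum, ← Finset.sum_sub_distrib, ← Finset.sum_add_distrib]
  exact Finset.sum_congr rfl fun i _ => Finset.sum_congr rfl fun j _ =>
    Finset.sum_congr rfl fun k _ => Finset.sum_congr rfl fun l _ => by ring

end Contract

/-- The vector field `(dxⁱ)♯`, whose components are the `i`-th row of the co-metric. -/
def coordSharp (g : Met n) (i : Fin n) : VF n := fun y => ginv g y i

theorem dder_coordSharp (g : Met n) (i : Fin n) (f : Pt n → ℝ) (x : Pt n) :
    dder (coordSharp g i) f x = ∑ s, ginv g x i s * pd s f x :=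
  (fderiv_apply_eq_dF_dotProduct f x _).trans (dotProduct_comm _ _)

theorem dder_sharp_const (g : Met n) (a : Fin n → ℝ) (f : Pt n → ℝ) (x : Pt n) :
    dder (sharp g fun _ => a) f x = ∑ i, a i * dder (coordSharp g i) f x := by
  have hsharp : sharp g (fun _ => a) x = ∑ i, a i • coordSharp g i x := by
    funext k
    simp only [sharp, coordSharp, Finset.sum_apply, Pi.smul_apply, smul_eq_mul, mul_comm]
  simp only [dder, hsharp, map_sum, map_smul, smul_eq_mul]

section Coordinates

variable (hg : IsPseudoRiemannAt g x) (a b c d : Fin n → ℝ)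
include hg

theorem dder_gF_const (X : VF n) :
    dder X (gF g (fun _ => a) (fun _ => b)) x =
      ∑ i, a i * ∑ j, b j * dder X (fun y => ginv g y i j) x := by
  have hginv (i j : Fin n) : DifferentiableAt ℝ (fun y => ginv g y i j) x :=
    (hg.contDiffAt_ginv i j).differentiableAt two_ne_zero
  have hgF : gF g (fun _ => a) (fun _ => b) = fun y => ∑ i, a i * ∑ j, b j * ginv g y i j := by
    funext y
    simp only [gF, Finset.mul_sum]
    exact Finset.sum_congr rfl fun i _ => Finset.sum_congr rfl fun j _ => by ring
  rw [hgF, dder_sum_mul fun i => .fun_sum fun j _ => (hginv i j).const_mul (b j)]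
  simp only [dder_sum_mul (hginv _)]

theorem coordDeriv_sharp_const :
    coordDeriv (sharp g fun _ => a) (sharp g fun _ => b) x =
      ∑ i, a i • ∑ k, b k • coordDeriv (coordSharp g i) (coordSharp g k) x := by
  funext p
  have hsharp : (fun y => sharp g (fun _ => b) y p) = fun y => ∑ k, b k * coordSharp g k y p := by
    simp only [sharp, coordSharp, mul_comm]
  have hcoord (k : Fin n) : DifferentiableAt ℝ (fun y => coordSharp g k y p) x :=
    (hg.contDiffAt_ginv k p).differentiableAt two_ne_zero
  rw [coordDeriv, dder_sharp_const, hsharp]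
  simp only [dder_sum_mul hcoord, coordDeriv, Finset.sum_apply, Pi.smul_apply, smul_eq_mul]

theorem contract_dder_dder_ginv :
    contract (fun i j k l =>
      dder (coordSharp g i) (dder (coordSharp g j) fun y => ginv g y k l) x) a b c d =
      dder (sharp g fun _ => a) (dder (sharp g fun _ => b) (gF g (fun _ => c) fun _ => d)) x := by
  have hdiff (j k l : Fin n) :
      DifferentiableAt ℝ (dder (coordSharp g j) fun y => ginv g y k l) x :=
    (contDiffAt_dder (hg.contDiffAt_ginv k l)
      (contDiffAt_pi.2 fun s => (hg.contDiffAt_ginv j s).of_le one_le_two)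
      one_add_one_eq_two.le).differentiableAt one_ne_zero
  have hdiff₂ (j k : Fin n) : DifferentiableAt ℝ
      (fun y => ∑ l, d l * dder (coordSharp g j) (fun z => ginv g z k l) y) x :=
    .fun_sum fun l _ => (hdiff j k l).const_mul (d l)
  have hdiff₁ (j : Fin n) : DifferentiableAt ℝ
      (fun y => ∑ k, c k * ∑ l, d l * dder (coordSharp g j) (fun z => ginv g z k l) y) x :=
    .fun_sum fun k _ => (hdiff₂ j k).const_mul (c k)
  have hinner : dder (sharp g fun _ => b) (gF g (fun _ => c) fun _ => d) =ᶠ[𝓝 x] fun y =>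
      ∑ j, b j * ∑ k, c k * ∑ l, d l * dder (coordSharp g j) (fun z => ginv g z k l) y :=
    hg.eventually.mono fun y hy => by rw [dder_sharp_const]; simp only [dder_gF_const hy]
  rw [dder_congr hinner, dder_sharp_const]
  simp only [contract, dder_sum_mul hdiff₁, dder_sum_mul (hdiff₂ _),
    dder_sum_mul (hdiff _ _)]

theorem contract_metricAt_ginv_dF :
    contract (fun i j k l =>
      metricAt (ginv g) x (dF (fun y => ginv g y i j) x) (dF (fun y => ginv g y k l) x)) a b c d =
      metricAt (ginv g) x (dF (gF g (fun _ => a) fun _ => b) x)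
        (dF (gF g (fun _ => c) fun _ => d) x) := by
  have hdF (u v : Fin n → ℝ) : dF (gF g (fun _ => u) fun _ => v) x =
      ∑ i, u i • ∑ j, v j • dF (fun y => ginv g y i j) x := by
    funext s
    simp only [Finset.sum_apply, Pi.smul_apply, smul_eq_mul]
    exact dder_gF_const hg u v fun _ => Pi.single s 1
  rw [hdF, hdF]
  exact contract_bilin a b c d _ _ _

theorem contract_metricAt_coordDeriv :
    contract (fun i j k l => metricAt g x (coordDeriv (coordSharp g i) (coordSharp g k) x)
      (coordDeriv (coordSharp g j) (coordSharp g l) x)) a b c d =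
      metricAt g x (coordDeriv (sharp g fun _ => a) (sharp g fun _ => c) x)
        (coordDeriv (sharp g fun _ => b) (sharp g fun _ => d) x) := by
  rw [contract_swap, coordDeriv_sharp_const hg, coordDeriv_sharp_const hg]
  exact contract_bilin a c b d _ _ _

end Coordinates

theorem metricAt_coordDeriv_coordSharp (g : Met n) (x : Pt n) (i j k l : Fin n) :
    metricAt g x (coordDeriv (coordSharp g i) (coordSharp g k) x)
      (coordDeriv (coordSharp g j) (coordSharp g l) x) =
      ∑ s, ∑ t, ∑ p, ∑ q, ginv g x i s * pd s (fun y => ginv g y k p) x * g x p q *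
        ginv g x j t * pd t (fun y => ginv g y l q) x := by
  have hsum (i k : Fin n) : coordDeriv (coordSharp g i) (coordSharp g k) x =
      ∑ s, ginv g x i s • fun p => pd s (fun y => ginv g y k p) x := by
    funext p
    simp only [coordDeriv, dder_coordSharp, coordSharp, Finset.sum_apply, Pi.smul_apply,
      smul_eq_mul]
  rw [hsum, hsum, LinearMap.map_sum₂]
  simp only [map_sum, map_smul, LinearMap.smul_apply, smul_eq_mul, Matrix.toBilin'_apply,
    Finset.mul_sum]
  exact Finset.sum_congr rfl fun s _ => Finset.sum_congr rfl fun t _ =>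
    Finset.sum_congr rfl fun p _ => Finset.sum_congr rfl fun q _ => by ring

theorem metricAt_ginv_dF (g : Met n) (f h : Pt n → ℝ) (x : Pt n) :
    metricAt (ginv g) x (dF f x) (dF h x) = ∑ s, ∑ t, pd s f x * ginv g x s t * pd t h x :=
  Matrix.toBilin'_apply _ _ _

end RG

theorem mario_formula_coordinates_general {n : ℕ} {g : Met n} {x : Pt n}
    (hg : IsPseudoRiemannAt g x) (a b : Fin n → ℝ) :
    gV g (Rcurv g (sharp g (fun _ => a)) (sharp g (fun _ => b)) (sharp g (fun _ => b)))
        (sharp g (fun _ => a)) x =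
      ∑ i, ∑ j, ∑ k, ∑ l,
        (a i * b k - a k * b i) * (a j * b l - a l * b j) *
        ( (1/2) * (∑ s, ginv g x i s *
              pd s (fun y => ∑ t, ginv g y j t * pd t (fun z => ginv g z k l) y) x)
          - (1/8) * (∑ s, ∑ t, pd s (fun y => ginv g y i j) x * ginv g x s t *
              pd t (fun y => ginv g y k l) x)
          - (3/4) * (∑ s, ∑ t, ∑ p, ∑ q, ginv g x i s * pd s (fun y => ginv g y k p) x *
              g x p q * ginv g x j t * pd t (fun y => ginv g y l q) x) ) := by
  have hsymm := gF_comm_eventuallyEq hg.eventually_isSymm (fun _ => b) (fun _ => a)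
  have hdF : dF (gF g (fun _ => b) fun _ => a) x = dF (gF g (fun _ => a) fun _ => b) x :=
    funext fun s => dder_congr hsymm fun _ => Pi.single s 1
  rw [gV_Rcurv_sharp hg (isClosedFormAt_const a x) (isClosedFormAt_const b x)]
  simp only [← dder_coordSharp, ← metricAt_ginv_dF, ← metricAt_coordDeriv_coordSharp]
  rw [sum_antisymm_mul_eq_contract]
  simp only [contract_sub, contract_const_mul, contract_dder_dder_ginv hg,
    contract_metricAt_ginv_dF hg, contract_metricAt_coordDeriv hg]
  simp only [grad, metricAt_sharp_sharp hg.det_ne_zero hg.isSymm, bracket_apply, map_sub,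
    LinearMap.sub_apply, hdF, dder_congr (dder_eventuallyEq hsymm _)]
  rw [metricAt_comm hg.isSymm.inv (dF (gF g (fun _ => b) fun _ => b) x)]
  ring

/-- **Mario's formula in coordinates**: for 1-forms `α = aᵢ dxⁱ`, `β = bᵢ dxⁱ` with
constant coefficients on an open set `U ⊆ ℝⁿ` with a smooth Riemannian metric `g`,
the numerator of sectional curvature is
`(aᵢb_k − a_kbᵢ)(a_jb_l − a_lb_j)(R₁^{ijkl} + R₂^{ijkl} + R₃^{ijkl})`. -/
theorem mario_formula_coordinates {n : ℕ} (U : Set (Pt n)) (hU : IsOpen U)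
    (g : Met n) (hg : IsRiemannOn U g) (a b : Fin n → ℝ) :
    ∀ x ∈ U,
      gV g (Rcurv g (sharp g (fun _ => a)) (sharp g (fun _ => b)) (sharp g (fun _ => b)))
          (sharp g (fun _ => a)) x =
        ∑ i, ∑ j, ∑ k, ∑ l,
          (a i * b k - a k * b i) * (a j * b l - a l * b j) *
          ( (1/2) * (∑ s, ginv g x i s *
                pd s (fun y => ∑ t, ginv g y j t * pd t (fun z => ginv g z k l) y) x)
            - (1/8) * (∑ s, ∑ t, pd s (fun y => ginv g y i j) x * ginv g x s t *
                pd t (fun y => ginv g y k l) x)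
            - (3/4) * (∑ s, ∑ t, ∑ p, ∑ q, ginv g x i s * pd s (fun y => ginv g y k p) x *
                g x p q * ginv g x j t * pd t (fun y => ginv g y l q) x) ) :=
  fun _ hx => mario_formula_coordinates_general (hg.isPseudoRiemannAt hU hx) a b
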